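/- The centralizer in PL₂([0,1]) of the set {a⁻ᵏbaᵏ : k ∈ ℤ} equals the subgroup generated by this set: a map f ∈ PL₂([0,1]) commutes with a⁻ᵏbaᵏ for every k ∈ ℤ if and only if f = ∏_{k∈ℤ} a⁻ᵏb^{lₖ}aᵏ for some finitely supported family (lₖ)_{k∈ℤ} of integers. -/

import Mathlib

/-!
Put `pt k = a^k(1/2)`. Direct computation shows that `b` is the identity outside `(1/2, 7/8)`,
moves every point of that interval up, and has slope `2` to the right of `1/2`. Since
`a(1/2) = 7/8`, the intervals `[pt k, pt (k+1)]` tile `(0,1)`, and `c k` is supported on the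
`k`-th of them, again with slope `2` to the right of `pt k` (`c_fix`, `lt_c`, `c_germ`). In
particular a product of powers of the `c k` acts on the `k`-th interval as a power of `c k`
(`phi_apply`).

If `f` commutes with all `c k`, it preserves their supports, so it fixes every `pt k` (`f_pt`).
If `f` has slope `2^s` to the right of `pt k`, it coincides with `(c k)^s` near `pt k`, and by
commutation on the whole interval, because backward `c k`-orbits converge to `pt k` (`f_local`).
Finally, the points `pt k` accumulate at `0` and `1`, so the outermost affine pieces of `f` each
have two fixed points and are the identity; hence only finitely many exponents are needed.

Conversely, the image of the commutative group `⨁ ℤ` is commutative.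
-/

noncomputable section
set_option maxHeartbeats 2000000


/-- The underlying function of Thompson's generator `x₀`, extended by the
identity outside `[0,1]`. -/
def x0fun : ℝ → ℝ := fun α =>
  if α < 0 then α
  else if α ≤ 1/4 then 2*α
  else if α ≤ 1/2 then α + 1/4
  else if α ≤ 1 then α/2 + 1/2
  else α

/-- The inverse of `x0fun`. -/
def x0inv : ℝ → ℝ := fun α =>
  if α < 0 then α
  else if α ≤ 1/2 then α/2
  else if α ≤ 3/4 then α - 1/4
  else if α ≤ 1 then 2*α - 1
  else α

/-- Thompson's generator `x₀`, as a permutation of `ℝ` which is the identity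
outside `[0,1]`:  `x₀ α = 2α` on `[0,1/4]`, `α + 1/4` on `[1/4,1/2]`,
`α/2 + 1/2` on `[1/2,1]`. -/
def x₀ : Equiv.Perm ℝ where
  toFun := x0fun
  invFun := x0inv
  left_inv := by
    intro x
    simp only [x0fun, x0inv]
    split_ifs <;> linarith
  right_inv := by
    intro x
    simp only [x0fun, x0inv]
    split_ifs <;> linarith

/-- The underlying function of Thompson's generator `x₁`, extended by the
identity outside `[0,1]`. -/
def x1fun : ℝ → ℝ := fun α =>
  if α ≤ 1/2 then α
  else if α ≤ 5/8 then 2*α - 1/2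
  else if α ≤ 3/4 then α + 1/8
  else if α ≤ 1 then α/2 + 1/2
  else α

/-- The inverse of `x1fun`. -/
def x1inv : ℝ → ℝ := fun α =>
  if α ≤ 1/2 then α
  else if α ≤ 3/4 then α/2 + 1/4
  else if α ≤ 7/8 then α - 1/8
  else if α ≤ 1 then 2*α - 1
  else α

/-- Thompson's generator `x₁`, as a permutation of `ℝ` which is the identity
outside `[0,1]`:  `x₁ α = α` on `[0,1/2]`, `2α - 1/2` on `[1/2,5/8]`,
`α + 1/8` on `[5/8,3/4]`, and on `[3/4,1]` the affine map of slope `1/2`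
fixing `1` (written `α/2 + 3/4` in the source, an evident typo for
`α/2 + 1/2`, the unique slope-`1/2` affine map with `3/4 ↦ 7/8`, `1 ↦ 1`). -/
def x₁ : Equiv.Perm ℝ where
  toFun := x1fun
  invFun := x1inv
  left_inv := by
    intro x
    simp only [x1fun, x1inv]
    split_ifs <;> linarith
  right_inv := by
    intro x
    simp only [x1fun, x1inv]
    split_ifs <;> linarith

/-- `x₂ = x₀⁻¹ x₁ x₀` (maps written on the right), i.e. the map
`α ↦ x₀ (x₁ (x₀⁻¹ α))`; in terms of composition this is `x₀ * x₁ * x₀⁻¹`. -/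
def x₂ : Equiv.Perm ℝ := x₀ * x₁ * x₀⁻¹

/-- `b = x₁ x₂⁻¹` (maps written on the right), i.e. the map `α ↦ x₂⁻¹ (x₁ α)`. -/
def b : Equiv.Perm ℝ := x₂⁻¹ * x₁

/-- `a = x₀²`. -/
def a : Equiv.Perm ℝ := x₀ ^ 2

/-- The conjugate `a⁻ᵏ b aᵏ` (maps written on the right), i.e. the map
`α ↦ x₀²ᵏ (b (x₀⁻²ᵏ α))`. -/
def c (k : ℤ) : Equiv.Perm ℝ := x₀ ^ (2*k) * b * x₀ ^ (-(2*k))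

/-- A real number is dyadic rational if it is of the form `m / 2^s`. -/
def IsDyadic (x : ℝ) : Prop := ∃ m : ℤ, ∃ s : ℕ, x = (m : ℝ) / 2 ^ s

/-- `IsPL2 η μ f` says that (the restriction to `[η,μ]` of) `f` belongs to
`PL₂([η,μ])`: it is an order-preserving bijection of `[η,μ]` which is piecewise
affine with finitely many breakpoints, all at dyadic rationals, and with all
slopes integer powers of `2`. -/
def IsPL2 (η μ : ℝ) (f : ℝ → ℝ) : Prop :=
  Set.BijOn f (Set.Icc η μ) (Set.Icc η μ) ∧
  StrictMonoOn f (Set.Icc η μ) ∧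
  ∃ n : ℕ, 0 < n ∧ ∃ t : ℕ → ℝ,
    t 0 = η ∧ t n = μ ∧
    (∀ i, i < n → t i < t (i + 1)) ∧
    (∀ i, i ≤ n → IsDyadic (t i)) ∧
    (∀ i, i < n → ∃ s : ℤ, ∃ v : ℝ, ∀ x ∈ Set.Icc (t i) (t (i + 1)),
      f x = 2 ^ s * x + v)

open Set

/-! ### Two groups of permutations of the line -/

theorem perm_apply_inv (g : Equiv.Perm ℝ) (x : ℝ) : g (g⁻¹ x) = x := g.apply_symm_apply x

theorem perm_inv_apply (g : Equiv.Perm ℝ) (x : ℝ) : g⁻¹ (g x) = x := g.symm_apply_apply x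

/-- The order-preserving permutations of `ℝ`. -/
def monoPerm : Subgroup (Equiv.Perm ℝ) where
  carrier := {g | StrictMono g}
  mul_mem' := fun {g h} hg hh => StrictMono.comp (g := g) (f := h) hg hh
  one_mem' := strictMono_id
  inv_mem' := by
    intro g hg x y hxy
    have hg : StrictMono g := hg
    rw [← hg.lt_iff_lt]
    simpa using hxy

/-- The permutations of `ℝ` which are affine with positive slope on a right
neighbourhood of every point. -/
def rightAffine : Subgroup (Equiv.Perm ℝ) where
  carrier := {g | ∀ p, ∃ m > 0, ∃ δ > 0, ∀ u, 0 ≤ u → u ≤ δ → g (p + u) = g p + m * u}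
  mul_mem' := by
    intro g h hg hh p
    obtain ⟨m, hm, δ, hδ, H⟩ := hh p
    obtain ⟨m', hm', δ', hδ', H'⟩ := hg (h p)
    refine ⟨m' * m, by positivity, min δ (δ' / m), by positivity, fun u hu hu' => ?_⟩
    have h1 := le_min_iff.1 hu'
    have h2 := (le_div_iff₀ hm).1 h1.2
    rw [Equiv.Perm.mul_apply, H u hu h1.1, H' (m * u) (by positivity) (by linarith),
      Equiv.Perm.mul_apply]
    ring
  one_mem' := fun p => ⟨1, one_pos, 1, one_pos, fun u _ _ => by simp⟩
  inv_mem' := by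
    intro g hg p
    obtain ⟨m, hm, δ, hδ, H⟩ := hg (g⁻¹ p)
    refine ⟨m⁻¹, by positivity, m * δ, by positivity, fun u hu hu' => ?_⟩
    have h1 := H (m⁻¹ * u) (by positivity) (by
      rw [inv_mul_le_iff₀ hm]; exact hu')
    rw [Equiv.Perm.inv_eq_iff_eq, h1]
    simp only [perm_apply_inv]
    field_simp

/-! ### The maps `a` and `b` -/

theorem x₀_mono : x₀ ∈ monoPerm := by
  intro x y hxy
  change x0fun x < x0fun y
  simp only [x0fun]
  split_ifs <;> linarith

theorem x₁_mono : x₁ ∈ monoPerm := by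
  intro x y hxy
  change x1fun x < x1fun y
  simp only [x1fun]
  split_ifs <;> linarith

theorem b_mono : b ∈ monoPerm :=
  mul_mem (inv_mem (mul_mem (mul_mem x₀_mono x₁_mono) (inv_mem x₀_mono))) x₁_mono

theorem a_mono : a ∈ monoPerm := pow_mem x₀_mono 2

theorem c_eq (k : ℤ) : c k = a ^ k * b * a ^ (-k) := by
  have h : ∀ j : ℤ, a ^ j = x₀ ^ (2 * j) := fun j => by
    rw [a, zpow_mul]; rfl
  rw [c, h, h, mul_neg]

theorem c_mono (k : ℤ) : c k ∈ monoPerm := by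
  rw [c_eq]
  exact mul_mem (mul_mem (zpow_mem a_mono k) b_mono) (zpow_mem a_mono _)

theorem x₀_rightAffine : x₀ ∈ rightAffine := by
  intro p
  change ∃ m > 0, ∃ δ > 0, ∀ u, 0 ≤ u → u ≤ δ → x0fun (p + u) = x0fun p + m * u
  rcases lt_or_ge p 0 with h0 | h0
  · refine ⟨1, one_pos, -p / 2, by linarith, fun u hu hu' => ?_⟩
    simp only [x0fun]; split_ifs <;> linarith
  rcases lt_or_ge p (1/4) with h1 | h1
  · refine ⟨2, two_pos, 1/4 - p, by linarith, fun u hu hu' => ?_⟩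
    simp only [x0fun]; split_ifs <;> linarith
  rcases lt_or_ge p (1/2) with h2 | h2
  · refine ⟨1, one_pos, 1/2 - p, by linarith, fun u hu hu' => ?_⟩
    simp only [x0fun]; split_ifs <;> linarith
  rcases lt_or_ge p 1 with h3 | h3
  · refine ⟨1/2, by norm_num, 1 - p, by linarith, fun u hu hu' => ?_⟩
    simp only [x0fun]; split_ifs <;> linarith
  · refine ⟨1, one_pos, 1, one_pos, fun u hu hu' => ?_⟩
    simp only [x0fun]; split_ifs <;> linarith

theorem a_apply (x : ℝ) : a x = x0fun (x0fun x) := rfl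

theorem a_zero : a 0 = 0 := by simp [a_apply, x0fun]
theorem a_one : a 1 = 1 := by
  have h : x0fun 1 = 1 := by norm_num [x0fun]
  rw [a_apply, h, h]
theorem a_half : a (1/2) = 7/8 := by
  have h : x0fun (1/2) = 3/4 := by norm_num [x0fun]
  rw [a_apply, h]
  norm_num [x0fun]

theorem lt_a {x : ℝ} (h0 : 0 < x) (h1 : x < 1) : x < a x := by
  have h : ∀ y, 0 < y → y < 1 → y < x0fun y ∧ x0fun y < 1 := by
    intro y hy hy'
    simp only [x0fun]
    constructor <;> split_ifs <;> linarith
  rw [a_apply]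
  have := h x h0 h1
  have := h (x0fun x) (by linarith) (by linarith)
  linarith

theorem b_apply (y : ℝ) : b y = x0fun (x1inv (x0inv (x1fun y))) := rfl

theorem x0fun_x0inv (y : ℝ) : x0fun (x0inv y) = y := x₀.apply_symm_apply y

theorem b_of_le {y : ℝ} (h : y ≤ 1/2) : b y = y := by
  have h1 : x1fun y = y := by simp only [x1fun]; rw [if_pos (by assumption)]
  have h2 : x0inv y ≤ 1/2 := by simp only [x0inv]; split_ifs <;> linarith
  have h3 : x1inv (x0inv y) = x0inv y := by simp only [x1inv]; rw [if_pos (by assumption)]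
  rw [b_apply, h1, h3, x0fun_x0inv]

/-- `b` expands by the factor `2` to the right of its fixed point `1/2`. -/
theorem b_left {y : ℝ} (h : 1/2 ≤ y) (h' : y ≤ 5/8) : b y = 2 * y - 1/2 := by
  have h1 : x1fun y = 2 * y - 1/2 := by simp only [x1fun]; split_ifs <;> linarith
  have h2 : x0inv (2 * y - 1/2) ≤ 1/2 := by simp only [x0inv]; split_ifs <;> linarith
  have h3 : x1inv (x0inv (2 * y - 1/2)) = x0inv (2 * y - 1/2) := by
    simp only [x1inv]; rw [if_pos (by assumption)]
  rw [b_apply, h1, h3, x0fun_x0inv]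

theorem b_mid {y : ℝ} (h : 5/8 ≤ y) (h' : y ≤ 7/8) : b y = y / 2 + 7/16 := by
  rcases le_total y (3/4) with h4 | h4
  · have h1 : x1fun y = y + 1/8 := by simp only [x1fun]; split_ifs <;> linarith
    have h2 : x0inv (y + 1/8) = 2 * y - 3/4 := by simp only [x0inv]; split_ifs <;> linarith
    have h3 : x1inv (2 * y - 3/4) = y - 1/8 := by simp only [x1inv]; split_ifs <;> linarith
    rw [b_apply, h1, h2, h3]
    simp only [x0fun]; split_ifs <;> linarith
  · have h1 : x1fun y = y / 2 + 1/2 := by simp only [x1fun]; split_ifs <;> linarith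
    have h2 : x0inv (y / 2 + 1/2) = y := by simp only [x0inv]; split_ifs <;> linarith
    have h3 : x1inv y = y - 1/8 := by simp only [x1inv]; split_ifs <;> linarith
    rw [b_apply, h1, h2, h3]
    simp only [x0fun]; split_ifs <;> linarith

theorem b_of_ge {y : ℝ} (h : 7/8 ≤ y) : b y = y := by
  rcases le_total y 1 with h4 | h4
  · have h1 : x1fun y = y / 2 + 1/2 := by simp only [x1fun]; split_ifs <;> linarith
    have h2 : x0inv (y / 2 + 1/2) = y := by simp only [x0inv]; split_ifs <;> linarith
    have h3 : x1inv y = 2 * y - 1 := by simp only [x1inv]; split_ifs <;> linarith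
    rw [b_apply, h1, h2, h3]
    simp only [x0fun]; split_ifs <;> linarith
  · have h1 : x1fun y = y := by simp only [x1fun]; split_ifs <;> linarith
    have h2 : x0inv y = y := by simp only [x0inv]; split_ifs <;> linarith
    have h3 : x1inv y = y := by simp only [x1inv]; split_ifs <;> linarith
    rw [b_apply, h1, h2, h3]
    simp only [x0fun]; split_ifs <;> linarith

theorem lt_b {y : ℝ} (h : 1/2 < y) (h' : y < 7/8) : y < b y := by
  rcases le_total y (5/8) with h4 | h4
  · rw [b_left h.le h4]; linarith
  · rw [b_mid h4 h'.le]; linarith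

/-! ### The supports of the conjugates and their right multipliers -/

/-- The point `a^k(1/2)`, the left end of the support of `c k`. -/
def pt (k : ℤ) : ℝ := (a ^ k) (1/2)

theorem pt_succ (k : ℤ) : pt (k + 1) = (a ^ k) (7/8) := by
  rw [pt, zpow_add_one, Equiv.Perm.mul_apply, a_half]

theorem zpow_fix {g : Equiv.Perm ℝ} {x : ℝ} (h : g x = x) (k : ℤ) : (g ^ k) x = x :=
  Function.IsFixedPt.perm_zpow h k

theorem pt_pos (k : ℤ) : 0 < pt k := by
  have h : StrictMono (a ^ k) := zpow_mem a_mono k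
  have := h (show (0:ℝ) < 1/2 by norm_num)
  rwa [zpow_fix a_zero] at this

theorem pt_lt_one (k : ℤ) : pt k < 1 := by
  have h : StrictMono (a ^ k) := zpow_mem a_mono k
  have := h (show (1/2:ℝ) < 1 by norm_num)
  rwa [zpow_fix a_one] at this

theorem pt_mono : StrictMono pt := by
  refine strictMono_int_of_lt_succ fun k => ?_
  rw [pt_succ, pt]
  have h : StrictMono (a ^ k) := zpow_mem a_mono k
  exact h (by norm_num)

theorem c_apply (k : ℤ) (y : ℝ) : c k ((a ^ k) y) = (a ^ k) (b y) := by
  rw [c_eq]; simp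

theorem c_fix {k : ℤ} {x : ℝ} (h : x ≤ pt k ∨ pt (k + 1) ≤ x) : c k x = x := by
  have hm : StrictMono (a ^ k) := zpow_mem a_mono k
  obtain ⟨y, rfl⟩ := (a ^ k).surjective x
  rw [pt_succ, pt, hm.le_iff_le, hm.le_iff_le] at h
  rw [c_apply]
  rcases h with h | h
  · rw [b_of_le h]
  · rw [b_of_ge h]

theorem lt_c {k : ℤ} {x : ℝ} (h : pt k < x) (h' : x < pt (k + 1)) : x < c k x := by
  have hm : StrictMono (a ^ k) := zpow_mem a_mono k
  obtain ⟨y, rfl⟩ := (a ^ k).surjective x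
  rw [pt_succ, hm.lt_iff_lt] at h'
  rw [pt, hm.lt_iff_lt] at h
  have hb := lt_b h h'
  rw [c_apply]
  exact hm hb

/-- Conjugation by a right-affine map preserves the right multiplier of a fixed
point, so every `c k` doubles to the right of `pt k`, as `b` does to the right of `1/2`. -/
theorem c_germ (k : ℤ) : ∃ δ > 0, ∀ u, 0 ≤ u → u ≤ δ → c k (pt k + u) = pt k + 2 * u := by
  have ha : a ^ k ∈ rightAffine := zpow_mem (pow_mem x₀_rightAffine 2) k
  obtain ⟨m, hm, δ, hδ, H⟩ := ha (1/2)
  refine ⟨m * min (δ / 2) (1/8), by positivity, fun u hu hu' => ?_⟩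
  have h0 : 0 ≤ u / m := by positivity
  have h1 : u / m ≤ min (δ / 2) (1/8) := by rwa [div_le_iff₀' hm]
  obtain ⟨h2, h3⟩ := le_min_iff.1 h1
  have h4 := H (u / m) h0 (by linarith)
  have h5 := H (2 * (u / m)) (by linarith) (by linarith)
  have e1 : m * (u / m) = u := by field_simp
  have e2 : m * (2 * (u / m)) = 2 * u := by field_simp
  have e3 : b (1/2 + u / m) = 1/2 + 2 * (u / m) := by
    rw [b_left (by linarith) (by linarith)]; ring
  rw [e1] at h4
  rw [e2] at h5
  rw [pt, ← h4, c_apply, e3, h5]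

/-- At a fixed point the right multiplier of a power is the power of the right multiplier. -/
theorem germ_zpow {g : Equiv.Perm ℝ} {p m : ℝ} (hm : 0 < m)
    (hg : ∃ δ > 0, ∀ u, 0 ≤ u → u ≤ δ → g (p + u) = p + m * u) (s : ℤ) :
    ∃ δ > 0, ∀ u, 0 ≤ u → u ≤ δ → (g ^ s) (p + u) = p + m ^ s * u := by
  obtain ⟨δ, hδ, H⟩ := hg
  induction s using Int.induction_on with
  | zero => exact ⟨1, one_pos, fun u _ _ => by simp⟩
  | succ i ih =>
    obtain ⟨δ', hδ', H'⟩ := ih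
    refine ⟨min δ (δ' / m), by positivity, fun u hu hu' => ?_⟩
    obtain ⟨h1, h2⟩ := le_min_iff.1 hu'
    have h2 := (le_div_iff₀ hm).1 h2
    rw [zpow_add_one, Equiv.Perm.mul_apply, H u hu h1, H' _ (by positivity) (by linarith),
      zpow_add_one₀ hm.ne']
    ring
  | pred i ih =>
    obtain ⟨δ', hδ', H'⟩ := ih
    refine ⟨min (m * δ) (δ' * m), by positivity, fun u hu hu' => ?_⟩
    obtain ⟨h1, h2⟩ := le_min_iff.1 hu'
    have h2 := (div_le_iff₀ hm).2 h2
    have h3 : g⁻¹ (p + u) = p + u / m := by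
      rw [Equiv.Perm.inv_eq_iff_eq, H _ (by positivity) (by rwa [div_le_iff₀' hm])]
      field_simp
    rw [zpow_sub_one, Equiv.Perm.mul_apply, h3, H' _ (by positivity) h2,
      zpow_sub_one₀ hm.ne']
    field_simp

/-! ### Orbits, and the tiling of `(0,1)` -/

/-- Forward orbits inside an interval on which `g` moves points up approach its right end:
a supremum of the orbit inside the interval would itself be moved up. -/
theorem orbit_up {g : Equiv.Perm ℝ} (hg : g ∈ monoPerm) {p q : ℝ}
    (h : ∀ x, p < x → x < q → x < g x) {x y : ℝ} (hx : p < x) (hy : y < q) :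
    ∃ n : ℕ, y < (g ^ n) x := by
  by_contra! H
  have hb : BddAbove (range fun n : ℕ => (g ^ n) x) := ⟨y, by rintro _ ⟨n, rfl⟩; exact H n⟩
  set r := sSup (range fun n : ℕ => (g ^ n) x) with hr
  have h1 : ∀ n : ℕ, (g ^ n) x ≤ r := fun n => le_csSup hb ⟨n, rfl⟩
  have h2 : r ≤ y := csSup_le (range_nonempty _) (by rintro _ ⟨n, rfl⟩; exact H n)
  have h3 : x ≤ r := by simpa using h1 0
  have h4 := h r (by linarith) (by linarith)
  have hg : StrictMono g := hg
  have h5 : g⁻¹ r < r := by rw [← hg.lt_iff_lt]; simpa using h4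
  obtain ⟨_, ⟨n, rfl⟩, hn⟩ := exists_lt_of_lt_csSup (range_nonempty _) h5
  have h6 := hg hn
  have h7 := h1 (n + 1)
  rw [pow_succ', Equiv.Perm.mul_apply] at h7
  simp only [perm_apply_inv] at h6
  linarith

/-- The backward counterpart of `orbit_up`: backward orbits approach the left end. -/
theorem orbit_down {g : Equiv.Perm ℝ} (hg : g ∈ monoPerm) {p q : ℝ}
    (h : ∀ x, p < x → x < q → x < g x) {x y : ℝ} (hx : x < q) (hy : p < y) :
    ∃ n : ℕ, (g⁻¹ ^ n) x < y := by
  by_contra! H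
  have hb : BddBelow (range fun n : ℕ => (g⁻¹ ^ n) x) := ⟨y, by rintro _ ⟨n, rfl⟩; exact H n⟩
  set r := sInf (range fun n : ℕ => (g⁻¹ ^ n) x) with hr
  have h1 : ∀ n : ℕ, r ≤ (g⁻¹ ^ n) x := fun n => csInf_le hb ⟨n, rfl⟩
  have h2 : y ≤ r := le_csInf (range_nonempty _) (by rintro _ ⟨n, rfl⟩; exact H n)
  have h3 : r ≤ x := by simpa using h1 0
  have h4 := h r (by linarith) (by linarith)
  have hg' : StrictMono (g⁻¹ : Equiv.Perm ℝ) := inv_mem hg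
  obtain ⟨_, ⟨n, rfl⟩, hn⟩ := exists_lt_of_csInf_lt (range_nonempty _) h4
  have h6 := hg' hn
  have h7 := h1 (n + 1)
  rw [pow_succ', Equiv.Perm.mul_apply] at h7
  simp only [perm_inv_apply] at h6
  linarith

theorem exists_pt_gt {y : ℝ} (hy : y < 1) : ∃ k, y < pt k := by
  obtain ⟨n, hn⟩ := orbit_up a_mono (p := 0) (q := 1) (fun x => lt_a) (x := 1/2) (by norm_num) hy
  exact ⟨n, by rwa [pt, zpow_natCast]⟩

theorem exists_pt_lt {y : ℝ} (hy : 0 < y) : ∃ k, pt k < y := by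
  obtain ⟨n, hn⟩ := orbit_down a_mono (p := 0) (q := 1) (fun x => lt_a) (x := 1/2)
    (by norm_num) hy
  exact ⟨-n, by rwa [pt, zpow_neg, zpow_natCast, ← inv_pow]⟩

theorem exists_interval {x : ℝ} (h0 : 0 < x) (h1 : x < 1) :
    ∃ k, pt k ≤ x ∧ x < pt (k + 1) := by
  obtain ⟨N, hN⟩ := exists_pt_gt h1
  obtain ⟨M, hM⟩ := exists_pt_lt h0
  obtain ⟨k, hk, hk'⟩ := Int.exists_greatest_of_bdd (P := fun k => pt k ≤ x)
    ⟨N, fun z hz => (pt_mono.lt_iff_lt.1 (lt_of_le_of_lt hz hN)).le⟩ ⟨M, hM.le⟩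
  refine ⟨k, hk, ?_⟩
  by_contra! h
  have := hk' _ h
  omega

theorem c_pow_mem (k : ℤ) (s : ℤ) {x : ℝ} {p q : ℝ} (hp : c k p = p) (hq : c k q = q)
    (hx : x ∈ Icc p q) : (c k ^ s) x ∈ Icc p q := by
  have h : StrictMono (c k ^ s) := zpow_mem (c_mono k) s
  have h1 := h.monotone hx.1
  have h2 := h.monotone hx.2
  rw [zpow_fix hp] at h1
  rw [zpow_fix hq] at h2
  exact ⟨h1, h2⟩

theorem c_zero (k : ℤ) : c k 0 = 0 := c_fix (Or.inl (pt_pos k).le)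
theorem c_one (k : ℤ) : c k 1 = 1 := c_fix (Or.inr (pt_lt_one _).le)

/-! ### Products of powers of the conjugates -/

theorem phi_single (φ : Multiplicative (ℤ →₀ ℤ) →* Equiv.Perm ℝ)
    (hφ : ∀ k : ℤ, φ (Multiplicative.ofAdd (Finsupp.single k 1)) = c k)
    (k m : ℤ) : φ (Multiplicative.ofAdd (Finsupp.single k m)) = c k ^ m := by
  rw [← hφ, ← map_zpow, ← ofAdd_zsmul, Finsupp.smul_single, smul_eq_mul, mul_one]

theorem phi_ends (φ : Multiplicative (ℤ →₀ ℤ) →* Equiv.Perm ℝ)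
    (hφ : ∀ k : ℤ, φ (Multiplicative.ofAdd (Finsupp.single k 1)) = c k)
    (l : ℤ →₀ ℤ) :
    φ (Multiplicative.ofAdd l) 0 = 0 ∧ φ (Multiplicative.ofAdd l) 1 = 1 := by
  induction l using Finsupp.induction_linear with
  | zero => simp
  | add l l' h h' =>
    rw [ofAdd_add, map_mul, Equiv.Perm.mul_apply, Equiv.Perm.mul_apply, h'.1, h'.2]
    exact h
  | single k m =>
    rw [phi_single φ hφ]
    exact ⟨zpow_fix (c_zero k) m, zpow_fix (c_one k) m⟩

/-- The supports of the `c j` are disjoint, so only the `k`-th factor of `φ l` acts on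
the `k`-th interval. -/
theorem phi_apply (φ : Multiplicative (ℤ →₀ ℤ) →* Equiv.Perm ℝ)
    (hφ : ∀ k : ℤ, φ (Multiplicative.ofAdd (Finsupp.single k 1)) = c k)
    (l : ℤ →₀ ℤ) (k : ℤ) : ∀ x ∈ Icc (pt k) (pt (k + 1)),
    φ (Multiplicative.ofAdd l) x = (c k ^ l k) x := by
  induction l using Finsupp.induction_linear with
  | zero => simp
  | add l l' h h' =>
    intro x hx
    rw [ofAdd_add, map_mul, Equiv.Perm.mul_apply, h' x hx,
      h _ (c_pow_mem k _ (c_fix (Or.inl le_rfl)) (c_fix (Or.inr le_rfl)) hx),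
      Finsupp.add_apply, zpow_add, Equiv.Perm.mul_apply]
  | single j m =>
    intro x hx
    rw [phi_single φ hφ]
    rcases eq_or_ne j k with rfl | hjk
    · simp
    · rw [Finsupp.single_eq_of_ne' hjk, zpow_zero, Equiv.Perm.one_apply]
      refine zpow_fix (c_fix ?_) m
      rcases lt_or_gt_of_ne hjk with h | h
      · exact Or.inr (le_trans (pt_mono.monotone (by omega)) hx.1)
      · exact Or.inl (le_trans hx.2 (pt_mono.monotone (by omega)))

theorem pt_mem (k : ℤ) : pt k ∈ Icc (0:ℝ) 1 := ⟨(pt_pos k).le, (pt_lt_one k).le⟩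

/-! ### Maps commuting with the conjugates -/

theorem f_zero {f : ℝ → ℝ} (hbij : BijOn f (Icc 0 1) (Icc 0 1))
    (hmono : StrictMonoOn f (Icc 0 1)) : f 0 = 0 := by
  obtain ⟨z, hz, hz'⟩ := hbij.surjOn (show (0:ℝ) ∈ Icc (0:ℝ) 1 by simp)
  have h0 : (0:ℝ) ∈ Icc (0:ℝ) 1 := by simp
  have := hmono.monotoneOn h0 hz hz.1
  have := (hbij.mapsTo h0).1
  linarith

theorem f_one {f : ℝ → ℝ} (hbij : BijOn f (Icc 0 1) (Icc 0 1))
    (hmono : StrictMonoOn f (Icc 0 1)) : f 1 = 1 := by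
  obtain ⟨z, hz, hz'⟩ := hbij.surjOn (show (1:ℝ) ∈ Icc (0:ℝ) 1 by simp)
  have h0 : (1:ℝ) ∈ Icc (0:ℝ) 1 := by simp
  have := hmono.monotoneOn hz h0 hz.2
  have := (hbij.mapsTo h0).2
  linarith

/-- A map commuting with `c k` permutes its support and hence, preserving order, fixes the
end point `pt k`. -/
theorem f_pt {f : ℝ → ℝ} (hbij : BijOn f (Icc 0 1) (Icc 0 1))
    (hmono : StrictMonoOn f (Icc 0 1))
    (hcomm : ∀ (k : ℤ), ∀ α ∈ Icc (0:ℝ) 1, f (c k α) = c k (f α))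
    (k : ℤ) : f (pt k) = pt k := by
  -- `w` is a point of the support of `c k`
  obtain ⟨w, hw, hw'⟩ := exists_between (pt_mono (show k < k + 1 by omega))
  have hwI : w ∈ Icc (0:ℝ) 1 := ⟨(pt_pos k).le.trans hw.le, hw'.le.trans (pt_lt_one _).le⟩
  have supp : ∀ x ∈ Icc (0:ℝ) 1, (pt k < f x ∧ f x < pt (k + 1)) ↔ (pt k < x ∧ x < pt (k + 1)) := by
    intro x hx
    constructor
    · intro h
      by_contra hn
      have h1 : c k x = x := c_fix (by by_contra! h'; exact hn h')
      have h2 := hcomm k x hx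
      rw [h1] at h2
      have := lt_c h.1 h.2
      linarith
    · intro h
      by_contra hn
      have h1 : c k (f x) = f x := c_fix (by by_contra! h'; exact hn h')
      rw [← hcomm k x hx] at h1
      have h2 : c k x ∈ Icc (0:ℝ) 1 := by
        simpa using c_pow_mem k 1 (c_zero k) (c_one k) hx
      have := hbij.injOn h2 hx h1
      have := lt_c h.1 h.2
      linarith
  have hfw := (supp w hwI).2 ⟨hw, hw'⟩
  have hlt := hmono (pt_mem k) hwI hw
  refine le_antisymm ?_ ?_
  · by_contra! h
    have := ((supp _ (pt_mem k)).1 ⟨h, by linarith⟩).1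
    linarith
  · by_contra! h
    obtain ⟨z, hz, hz'⟩ := hbij.surjOn (pt_mem k)
    have h1 : pt k < z := by
      rw [← hmono.lt_iff_lt (pt_mem k) hz, hz']; exact h
    have h2 : z < w := by
      rw [← hmono.lt_iff_lt hz hwI, hz']; exact hfw.1
    have := ((supp z hz).2 ⟨h1, h2.trans hw'⟩).1
    linarith

/-- On the support of `c k` the map `f` is a power of `c k`: the exponent is read off from the
slope of `f` to the right of `pt k`, and equality near `pt k` propagates along `c k`-orbits. -/
theorem f_local {f : ℝ → ℝ} (hbij : BijOn f (Icc 0 1) (Icc 0 1))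
    (hmono : StrictMonoOn f (Icc 0 1))
    (hcomm : ∀ (k : ℤ), ∀ α ∈ Icc (0:ℝ) 1, f (c k α) = c k (f α))
    (k : ℤ) (hslope : ∃ s : ℤ, ∃ v : ℝ, ∃ q > pt k, ∀ x ∈ Icc (pt k) q,
      f x = 2 ^ s * x + v) :
    ∃ s : ℤ, ∀ x ∈ Icc (pt k) (pt (k + 1)), f x = (c k ^ s) x := by
  obtain ⟨s, v, q, hq, H⟩ := hslope
  refine ⟨s, fun x hx => ?_⟩
  have hp := f_pt hbij hmono hcomm k
  have hp' := f_pt hbij hmono hcomm (k + 1)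
  have hcp : c k (pt k) = pt k := c_fix (Or.inl le_rfl)
  rcases eq_or_lt_of_le hx.2 with rfl | hx2
  · rw [hp', zpow_fix (c_fix (Or.inr le_rfl))]
  obtain ⟨δ, hδ, G⟩ := germ_zpow two_pos (c_germ k) s
  have hxI : x ∈ Icc (0:ℝ) 1 := ⟨(pt_pos k).le.trans hx.1, hx.2.trans (pt_lt_one _).le⟩
  obtain ⟨n, hn⟩ := orbit_down (c_mono k) (p := pt k) (q := pt (k + 1)) (fun x => lt_c) hx2
    (show pt k < min q (pt k + δ) from lt_min hq (by linarith))
  set y := ((c k)⁻¹ ^ n) x with hy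
  obtain ⟨hn1, hn2⟩ := lt_min_iff.1 hn
  have hyx : x = (c k ^ n) y := by rw [hy, inv_pow, perm_apply_inv]
  have hyI : y ∈ Icc (pt k) 1 := by
    have := c_pow_mem k (-n) hcp (c_one k) (x := x) ⟨hx.1, hxI.2⟩
    rwa [zpow_neg, zpow_natCast, ← inv_pow] at this
  have hyI' : y ∈ Icc (0:ℝ) 1 := ⟨(pt_pos k).le.trans hyI.1, hyI.2⟩
  have hfy : f y = (c k ^ s) y := by
    have h1 := H (pt k) ⟨le_rfl, hq.le⟩
    have h2 := H y ⟨hyI.1, hn1.le⟩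
    have h3 := G (y - pt k) (by linarith [hyI.1]) (by linarith)
    rw [add_sub_cancel] at h3
    rw [h3, h2]
    rw [hp] at h1
    linear_combination -h1
  have hiter : ∀ n : ℕ, f ((c k ^ n) y) = (c k ^ n) (f y) := by
    intro n
    induction n with
    | zero => simp
    | succ n ih =>
      rw [pow_succ', Equiv.Perm.mul_apply, hcomm, ih, Equiv.Perm.mul_apply]
      have := c_pow_mem k n (c_zero k) (c_one k) hyI'
      rwa [zpow_natCast] at this
  clear_value y
  rw [hyx, hiter, hfy]
  exact DFunLike.congr_fun (((Commute.refl (c k)).pow_left n).zpow_right s).eq y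

/-! ### Affine pieces and the centralizer -/

theorem exists_piece {t : ℕ → ℝ} {p : ℝ} : ∀ n : ℕ, t 0 ≤ p → p < t n →
    ∃ i < n, t i ≤ p ∧ p < t (i + 1)
  | 0, h, h' => absurd h (not_le.2 h')
  | n + 1, h, hn => by
    rcases lt_or_ge p (t n) with h1 | h1
    · obtain ⟨i, hi, H⟩ := exists_piece n h h1
      exact ⟨i, by omega, H⟩
    · exact ⟨n, by omega, h1, hn⟩

/-- An affine function with two distinct fixed points is the identity. -/
theorem affine_id {m v p q : ℝ} (hpq : p ≠ q) (hp : p = m * p + v) (hq : q = m * q + v)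
    (x : ℝ) : m * x + v = x := by
  have h1 : (m - 1) * (p - q) = 0 := by linear_combination hq - hp
  have h2 : m - 1 = 0 := (mul_eq_zero.1 h1).resolve_right (sub_ne_zero.2 hpq)
  have h3 : m = 1 := by linarith
  subst h3
  linarith

/-- the centralizer in `PL₂([0,1])` of the set
`{a⁻ᵏbaᵏ : k ∈ ℤ}` is the subgroup generated by this set: a map
`f ∈ PL₂([0,1])` commutes with every `a⁻ᵏbaᵏ` iff `f = ∏_{k∈ℤ} (a⁻ᵏbaᵏ)^{lₖ}`
for some finitely supported family `(lₖ)` of integers; the product is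
expressed as `φ (ofAdd l)` for the homomorphism `φ` from `⨁_{k∈ℤ} ℤ` sending
the `k`-th coordinate generator to `a⁻ᵏbaᵏ`. -/
theorem centralizer_of_conjugates
    (φ : Multiplicative (ℤ →₀ ℤ) →* Equiv.Perm ℝ)
    (hφ : ∀ k : ℤ, φ (Multiplicative.ofAdd (Finsupp.single k 1)) = c k)
    (f : ℝ → ℝ) (hf : IsPL2 0 1 f) :
    (∀ (k : ℤ), ∀ α ∈ Set.Icc (0:ℝ) 1, f (c k α) = c k (f α)) ↔
      ∃ l : ℤ →₀ ℤ, Set.EqOn f ⇑(φ (Multiplicative.ofAdd l)) (Set.Icc (0:ℝ) 1) := by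
  obtain ⟨hbij, hmono, n, hn, t, ht0, htn, htlt, -, haff⟩ := hf
  constructor
  · intro hcomm
    have hfix := f_pt hbij hmono hcomm
    have hslope : ∀ k, ∃ s : ℤ, ∃ v : ℝ, ∃ q > pt k, ∀ x ∈ Set.Icc (pt k) q,
        f x = 2 ^ s * x + v := by
      intro k
      obtain ⟨i, hi, h1, h2⟩ := exists_piece (t := t) (p := pt k) n
        (by rw [ht0]; exact (pt_pos k).le) (by rw [htn]; exact pt_lt_one k)
      obtain ⟨s, v, H⟩ := haff i hi
      exact ⟨s, v, t (i + 1), h2, fun x hx => H x ⟨h1.trans hx.1, hx.2⟩⟩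
    choose s hs using fun k => f_local hbij hmono hcomm k (hslope k)
    -- the first affine piece of `f` fixes `0` and some `pt k`, so it is the identity
    have hlow : ∃ M : ℤ, ∀ x, 0 ≤ x → x ≤ pt M → f x = x := by
      obtain ⟨m, v, H⟩ := haff 0 hn
      have h01 := htlt 0 hn
      rw [ht0] at H h01
      obtain ⟨M, hM⟩ := exists_pt_lt h01
      refine ⟨M, fun x hx hx' => ?_⟩
      have e1 := H 0 ⟨le_rfl, h01.le⟩
      have e2 := H (pt M) ⟨(pt_pos M).le, hM.le⟩
      rw [f_zero hbij hmono] at e1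
      rw [hfix] at e2
      rw [H x ⟨hx, hx'.trans hM.le⟩]
      exact affine_id (pt_pos M).ne e1 e2 x
    have hhigh : ∃ N : ℤ, ∀ x, x ≤ 1 → pt N ≤ x → f x = x := by
      obtain ⟨j, rfl⟩ : ∃ j, n = j + 1 := ⟨n - 1, by omega⟩
      obtain ⟨m, v, H⟩ := haff j (by omega)
      have h01 := htlt j (by omega)
      rw [htn] at H h01
      obtain ⟨N, hN⟩ := exists_pt_gt h01
      refine ⟨N, fun x hx hx' => ?_⟩
      have e1 := H 1 ⟨h01.le, le_rfl⟩
      have e2 := H (pt N) ⟨hN.le, (pt_lt_one N).le⟩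
      rw [f_one hbij hmono] at e1
      rw [hfix] at e2
      rw [H x ⟨hN.le.trans hx', hx⟩]
      exact affine_id (pt_lt_one N).ne' e1 e2 x
    obtain ⟨M, hM⟩ := hlow
    obtain ⟨N, hN⟩ := hhigh
    let l : ℤ →₀ ℤ := Finsupp.onFinset (Finset.Icc M N)
      (fun k => if k ∈ Finset.Icc M N then s k else 0) (fun k hk => by
        by_contra h
        exact hk (if_neg h))
    have hl : ∀ k, l k = if k ∈ Finset.Icc M N then s k else 0 := fun k => rfl
    refine ⟨l, fun x hx => ?_⟩
    rcases eq_or_lt_of_le hx.1 with rfl | hx0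
    · rw [f_zero hbij hmono, (phi_ends φ hφ l).1]
    rcases eq_or_lt_of_le hx.2 with rfl | hx1
    · rw [f_one hbij hmono, (phi_ends φ hφ l).2]
    obtain ⟨k, hk1, hk2⟩ := exists_interval hx0 hx1
    rw [phi_apply φ hφ l k x ⟨hk1, hk2.le⟩, hl]
    split_ifs with h
    · exact hs k x ⟨hk1, hk2.le⟩
    · rw [zpow_zero, Equiv.Perm.one_apply]
      rw [Finset.mem_Icc, not_and_or, not_le, not_le] at h
      rcases h with h | h
      · exact hM x hx.1 (hk2.le.trans (pt_mono.monotone (by omega)))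
      · exact hN x hx.2 ((pt_mono.monotone h.le).trans hk1)
  · rintro ⟨l, hl⟩ k α hα
    have hmem : c k α ∈ Set.Icc (0:ℝ) 1 := by
      simpa using c_pow_mem k 1 (c_zero k) (c_one k) hα
    rw [hl hmem, hl hα, ← hφ, ← Equiv.Perm.mul_apply, ← Equiv.Perm.mul_apply, ← φ.map_mul,
      ← φ.map_mul, mul_comm]
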